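/- arXiv:1302.6298 — 2 statements merged into one kernel-verified Lean document; each statement's English description precedes it below -/
import Mathlib

section
/- In U = U_q⁺(A₂), set b₂' = e₂e₁ − q e₁e₂ and write E(a,b,c) = e₁^a (b₂')^b e₂^c for a,b,c ∈ ℕ, with the convention that any term having a negative index is read as 0 (its scalar coefficient then vanishes). Then: e₁·E(a,b,c) = E(a+1,b,c) and e₂·E(a,b,c) = q^{a−b} E(a,b,c+1) + [a]₁ E(a−1,b+1,c). -/
noncomputable section

/-- The base field `K = ℚ(q)`, rational functions over `ℚ`. -/
abbrev K : Type := RatFunc ℚ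

/-- The indeterminate `q`. -/
def q : K := RatFunc.X

/-- The `q`-integer `[m]₁ = (q^m - q^{-m})/(q - q⁻¹)`. -/
def qint (n : ℕ) : K := (q ^ n - q⁻¹ ^ n) / (q - q⁻¹)

/-- Generators of the free algebra on two letters. -/
def g (i : Fin 2) : FreeAlgebra K (Fin 2) := FreeAlgebra.ι K i

/-- The `q`-Serre relations of type `A₂`. -/
inductive SerreA2 : FreeAlgebra K (Fin 2) → FreeAlgebra K (Fin 2) → Prop
  | rel1 : SerreA2
      (g 0 * g 0 * g 1 - (q + q⁻¹) • (g 0 * g 1 * g 0) + g 1 * g 0 * g 0) 0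
  | rel2 : SerreA2
      (g 1 * g 1 * g 0 - (q + q⁻¹) • (g 1 * g 0 * g 1) + g 0 * g 1 * g 1) 0

/-- `U_q⁺(A₂)`: the free algebra on `e₁, e₂` modulo the `q`-Serre relations. -/
abbrev UA2 : Type := RingQuot SerreA2

/-- The Chevalley generator `e₁`. -/
def e1 : UA2 := RingQuot.mkAlgHom K SerreA2 (g 0)

/-- The Chevalley generator `e₂`. -/
def e2 : UA2 := RingQuot.mkAlgHom K SerreA2 (g 1)

/-- The root vector `b₁ = e₂`. -/
def b1 : UA2 := e2

/-- The root vector `b₂ = e₁e₂ − q e₂e₁`. -/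
def b2 : UA2 := e1 * e2 - q • (e2 * e1)

/-- The root vector `b₃ = e₁`. -/
def b3 : UA2 := e1

/-- The twisted root vector `b₂' = e₂e₁ − q e₁e₂`. -/
def b2' : UA2 := e2 * e1 - q • (e1 * e2)

/-- The PBW monomial `E(a,b,c) = e₁^a (b₂')^b e₂^c`. -/
def Emon (a b c : ℕ) : UA2 := e1 ^ a * b2' ^ b * e2 ^ c

/-!
Write `[x, y]_t = xy - t yx`, so that `b₂' = [e₂, e₁]_q`. Both `q`-Serre relations are iterated
`q`-commutators: they say `[b₂', e₁]_{q⁻¹} = 0` and `[e₂, b₂']_{q⁻¹} = 0`. The twisted Leibniz rule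
`[z, xy]_{st} = [z, x]_s y + s x [z, y]_t` then moves `e₂` first past `e₁ ^ a`, where the
contributions of `[e₂, e₁]_q` add up to the geometric sum `[a]₁ = ∑ q ^ i q⁻¹ ^ (a - 1 - i)`, and
next past `b₂' ^ b`, which costs only the scalar `q⁻¹ ^ b`.
-/

section qCommutator

variable {R A : Type*} [CommRing R] [Ring A] [Algebra R A]

/-- The `t`-commutator `[x, y]_t = xy - t yx` of two elements of an `R`-algebra, `t ∈ R`. Its
vanishing expresses that `x` and `y` commute up to the scalar `t`. -/
def qCommutator (t : R) (x y : A) : A := x * y - t • (y * x)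

theorem mul_eq_smul_mul_add_qCommutator (t : R) (x y : A) :
    x * y = t • (y * x) + qCommutator t x y :=
  (add_sub_cancel _ _).symm

theorem qCommutator_mul_right (s t : R) (z x y : A) :
    qCommutator (s * t) z (x * y) = qCommutator s z x * y + s • (x * qCommutator t z y) := by
  simp only [qCommutator, sub_mul, mul_sub, smul_sub, smul_mul_assoc, mul_smul_comm, smul_smul,
    mul_assoc]
  abel

theorem qCommutator_pow_right_eq_zero {t : R} {x y : A} (h : qCommutator t x y = 0) (n : ℕ) :
    qCommutator (t ^ n) x (y ^ n) = 0 := by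
  induction n with
  | zero => simp [qCommutator]
  | succ n ih => simp [pow_succ, qCommutator_mul_right, ih, h]

theorem qCommutator_qCommutator_left (s t : R) (x y : A) :
    qCommutator t (qCommutator s y x) x
      = (s * t) • (x * x * y) - (s + t) • (x * y * x) + y * x * x := by
  simp only [qCommutator, sub_mul, mul_sub, smul_sub, smul_mul_assoc, mul_smul_comm, smul_smul,
    add_smul, mul_assoc, mul_comm t s]
  abel

theorem qCommutator_qCommutator_right (s t : R) (x y : A) :
    qCommutator t y (qCommutator s y x)
      = y * y * x - (s + t) • (y * x * y) + (s * t) • (x * y * y) := by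
  simp only [qCommutator, sub_mul, mul_sub, smul_sub, smul_mul_assoc, mul_smul_comm, smul_smul,
    add_smul, mul_assoc, mul_comm t s]
  abel

theorem qCommutator_pow_right {s t : R} {x y : A}
    (h : qCommutator t (qCommutator s y x) x = 0) (n : ℕ) :
    qCommutator (s ^ n) y (x ^ n)
      = (∑ i ∈ Finset.range n, s ^ i * t ^ (n - 1 - i)) •
        (x ^ (n - 1) * qCommutator s y x) := by
  obtain _ | n := n
  · simp [qCommutator]
  induction n with
  | zero => simp
  | succ n ih =>
    set z := qCommutator s y x
    have hzx : z * x = t • (x * z) := sub_eq_zero.mp h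
    simp only [Nat.add_sub_cancel] at ih ⊢
    calc qCommutator (s ^ (n + 1 + 1)) y (x ^ (n + 1 + 1))
        = qCommutator (s ^ (n + 1)) y (x ^ (n + 1)) * x + s ^ (n + 1) • (x ^ (n + 1) * z) := by
          rw [pow_succ s, pow_succ x, qCommutator_mul_right]
      _ = (∑ i ∈ Finset.range (n + 1), s ^ i * t ^ (n - i)) • (x ^ n * (z * x))
            + s ^ (n + 1) • (x ^ (n + 1) * z) := by
          rw [ih, smul_mul_assoc, mul_assoc]
      _ = (s ^ (n + 1) + t * ∑ i ∈ Finset.range (n + 1), s ^ i * t ^ (n - i)) •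
            (x ^ (n + 1) * z) := by
          rw [hzx, mul_smul_comm, smul_smul, ← mul_assoc, ← pow_succ, ← add_smul, add_comm,
            mul_comm t]
      _ = (∑ i ∈ Finset.range (n + 1 + 1), s ^ i * t ^ (n + 1 - i)) • (x ^ (n + 1) * z) := by
          rw [geom_sum₂_succ_eq s t (n := n + 1), Nat.add_sub_cancel]

theorem mul_pow_mul_qCommutator_pow_mul_pow {s t r : R} {x y : A}
    (hx : qCommutator t (qCommutator s y x) x = 0)
    (hy : qCommutator r y (qCommutator s y x) = 0) (a b c : ℕ) :
    y * (x ^ a * qCommutator s y x ^ b * y ^ c)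
      = (s ^ a * r ^ b) • (x ^ a * qCommutator s y x ^ b * y ^ (c + 1))
        + (∑ i ∈ Finset.range a, s ^ i * t ^ (a - 1 - i)) •
          (x ^ (a - 1) * qCommutator s y x ^ (b + 1) * y ^ c) := by
  have y_mul_pow_x := mul_eq_smul_mul_add_qCommutator (s ^ a) y (x ^ a)
  rw [qCommutator_pow_right hx] at y_mul_pow_x
  set z := qCommutator s y x
  set σ := ∑ i ∈ Finset.range a, s ^ i * t ^ (a - 1 - i)
  have y_mul_pow_z : y * z ^ b = r ^ b • (z ^ b * y) :=
    sub_eq_zero.mp (qCommutator_pow_right_eq_zero hy b)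
  calc y * (x ^ a * z ^ b * y ^ c)
      = (y * x ^ a) * z ^ b * y ^ c := by simp only [mul_assoc]
    _ = s ^ a • (x ^ a * (y * z ^ b) * y ^ c) + σ • (x ^ (a - 1) * (z * z ^ b) * y ^ c) := by
        simp only [y_mul_pow_x, add_mul, smul_mul_assoc, mul_assoc]
    _ = (s ^ a * r ^ b) • (x ^ a * z ^ b * y ^ (c + 1))
          + σ • (x ^ (a - 1) * z ^ (b + 1) * y ^ c) := by
        simp only [y_mul_pow_z, pow_succ' z, pow_succ' y, smul_mul_assoc, mul_smul_comm, smul_smul,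
          mul_assoc]

end qCommutator

theorem statement7_general {F A : Type*} [Field F] [Ring A] [Algebra F A] {t : F} (ht : t ≠ t⁻¹)
    {x y : A} (hxxy : x * x * y - (t + t⁻¹) • (x * y * x) + y * x * x = 0)
    (hyyx : y * y * x - (t + t⁻¹) • (y * x * y) + x * y * y = 0) (a b c : ℕ) :
    x * (x ^ a * qCommutator t y x ^ b * y ^ c) = x ^ (a + 1) * qCommutator t y x ^ b * y ^ c ∧
    y * (x ^ a * qCommutator t y x ^ b * y ^ c)
      = t ^ ((a : ℤ) - b) • (x ^ a * qCommutator t y x ^ b * y ^ (c + 1))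
        + ((t ^ a - t⁻¹ ^ a) / (t - t⁻¹)) •
          (x ^ (a - 1) * qCommutator t y x ^ (b + 1) * y ^ c) := by
  have ht₀ : t ≠ 0 := by
    rintro rfl
    exact ht inv_zero.symm
  have hx : qCommutator t⁻¹ (qCommutator t y x) x = 0 := by
    rw [qCommutator_qCommutator_left, mul_inv_cancel₀ ht₀, one_smul, hxxy]
  have hy : qCommutator t⁻¹ y (qCommutator t y x) = 0 := by
    rw [qCommutator_qCommutator_right, mul_inv_cancel₀ ht₀, one_smul, hyyx]
  have zpow_eq : t ^ ((a : ℤ) - b) = t ^ a * t⁻¹ ^ b := by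
    rw [zpow_sub₀ ht₀, zpow_natCast, zpow_natCast, inv_pow, div_eq_mul_inv]
  refine ⟨by simp only [pow_succ', mul_assoc], ?_⟩
  rw [zpow_eq, ← geom₂_sum ht]
  exact mul_pow_mul_qCommutator_pow_mul_pow hx hy a b c

theorem q_ne_inv_self : q ≠ q⁻¹ := by
  intro h
  have degree_eq := congrArg RatFunc.intDegree h
  rw [RatFunc.intDegree_inv, q, RatFunc.intDegree_X] at degree_eq
  omega

theorem e1_e1_e2_serre : e1 * e1 * e2 - (q + q⁻¹) • (e1 * e2 * e1) + e2 * e1 * e1 = 0 := by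
  simpa only [e1, e2, map_add, map_sub, map_smul, map_mul, map_zero] using
    RingQuot.mkAlgHom_rel K SerreA2.rel1

theorem e2_e2_e1_serre : e2 * e2 * e1 - (q + q⁻¹) • (e2 * e1 * e2) + e1 * e2 * e2 = 0 := by
  simpa only [e1, e2, map_add, map_sub, map_smul, map_mul, map_zero] using
    RingQuot.mkAlgHom_rel K SerreA2.rel2

/-- left multiplication on the PBW basis `E(a,b,c)` of `U_q⁺(A₂)`.
(Terms with a negative index appear with vanishing coefficient, so truncated
subtraction on `ℕ` realizes the stated convention.) -/
theorem statement7 (a b c : ℕ) :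
    e1 * Emon a b c = Emon (a + 1) b c ∧
    e2 * Emon a b c
      = (q ^ ((a : ℤ) - b)) • Emon a b (c + 1) + qint a • Emon (a - 1) (b + 1) c :=
  statement7_general q_ne_inv_self e1_e1_e2_serre e2_e2_e1_serre a b c
end
end

section
/- Let M⁽¹⁾, M⁽²⁾, M⁽³⁾ be the 3×3 matrices over End(F ⊗ F ⊗ F) given by: M⁽¹⁾ has entries of the 3×3 matrix [[a⁻, k, 0], [−q k, a⁺, 0], [0, 0, 1]] placed in the first tensor factor (identity in the others); M⁽²⁾ has entries of [[1, 0, 0], [0, a⁻, k], [0, −q k, a⁺]] placed in the second tensor factor; M⁽³⁾ has entries of [[a⁻, k, 0], [−q k, a⁺, 0], [0, 0, 1]] placed in the third tensor factor. Let M = M⁽¹⁾M⁽²⁾M⁽³⁾ (matrix product over the noncommutative ring End(F⊗F⊗F)). Then: M₁₃ = k⊗k⊗1; M₂₃ = a⁺⊗k⊗1; M₁₂M₂₃ − q M₂₂M₁₃ = 1⊗k⊗k; and M₁₂M₃₃ − q M₃₂M₁₃ = a⁻⊗a⁺⊗k + k⊗1⊗a⁺. (These are the images π_{121}(σ₁),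 π_{121}(σ₁e₁), π_{121}(σ₂), π_{121}(σ₂e₂) of the distinguished elements σ₁ = t₁₃, σ₁e₁ = t₂₃, σ₂ = t₁₂t₂₃ − q t₂₂t₁₃, σ₂e₂ = t₁₂t₃₃ − q t₃₂t₁₃ of A_q(A₂) under the tensor product of fundamental representations.) -/
noncomputable section

/-- The Fock space `F` with basis `|m⟩, m ∈ ℕ`. -/
abbrev F : Type := ℕ →₀ K

/-- The basis vector `|m⟩`. -/
def ket (m : ℕ) : F := Finsupp.single m 1

/-- The operator `k : |m⟩ ↦ q^m |m⟩`. -/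
def opK : Module.End K F := Finsupp.lift F K ℕ fun m => (q ^ m) • ket m

/-- The operator `a⁺ : |m⟩ ↦ |m+1⟩`. -/
def opAp : Module.End K F := Finsupp.lift F K ℕ fun m => ket (m + 1)

/-- The operator `a⁻ : |m⟩ ↦ (1 - q^{2m}) |m-1⟩` (so `a⁻|0⟩ = 0`). -/
def opAm : Module.End K F := Finsupp.lift F K ℕ fun m => (1 - q ^ (2 * m)) • ket (m - 1)

open TensorProduct

/-- The triple tensor product `F ⊗ F ⊗ F`. -/
abbrev T3 : Type := F ⊗[K] (F ⊗[K] F)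

instance : AddCommGroup T3 := by
  exact @TensorProduct.addCommGroup K _ F (F ⊗[K] F) _ _ _ _

/-- `f ⊗ g ⊗ h` as an operator on `F ⊗ F ⊗ F`. -/
def tens3 (f g h : Module.End K F) : Module.End K T3 :=
  TensorProduct.map f (TensorProduct.map g h)

/-- The matrix `M⁽¹⁾` : the fundamental representation `π₁` placed in the first tensor factor. -/
def M1 : Matrix (Fin 3) (Fin 3) (Module.End K T3) :=
  !![tens3 opAm 1 1, tens3 opK 1 1, 0;
     (-q) • tens3 opK 1 1, tens3 opAp 1 1, 0;
     0, 0, 1]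

/-- The matrix `M⁽²⁾` : the fundamental representation `π₂` placed in the second tensor factor. -/
def M2 : Matrix (Fin 3) (Fin 3) (Module.End K T3) :=
  !![1, 0, 0;
     0, tens3 1 opAm 1, tens3 1 opK 1;
     0, (-q) • tens3 1 opK 1, tens3 1 opAp 1]

/-- The matrix `M⁽³⁾` : the fundamental representation `π₁` placed in the third tensor factor. -/
def M3 : Matrix (Fin 3) (Fin 3) (Module.End K T3) :=
  !![tens3 1 1 opAm, tens3 1 1 opK, 0;
     (-q) • tens3 1 1 opK, tens3 1 1 opAp, 0;
     0, 0, 1]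

/-- The product matrix `M = M⁽¹⁾M⁽²⁾M⁽³⁾`, i.e. `π₁₂₁(T)`. -/
def M : Matrix (Fin 3) (Fin 3) (Module.End K T3) := M1 * M2 * M3

/-!
Operators on different tensor factors commute, so the two quantum minors expand into sums of pure
tensors. In `t₁₂t₂₃ - q t₂₂t₁₃` these group into terms carrying `a⁻a⁺ + q²k²` and `ka⁺ - q a⁺k` in
the first factor, and in `t₁₂t₃₃ - q t₃₂t₁₃` into one carrying `a⁻a⁺ + q²k²` in the second. The
q-oscillator relations `a⁻a⁺ + q²k² = 1` and `ka⁺ = q a⁺k` collapse them to the stated values.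
-/

section QuantumMatrix

variable {R B : Type*} [CommRing R] [Ring B] [Algebra R B]

/-- The image of the generator matrix `(tᵢⱼ)` of `A_q(A₂)` under the fundamental representation
`π₁`, written in terms of the q-oscillator operators `k`, `a⁺ = ap`, `a⁻ = am`. -/
def pi₁Matrix (q : R) (k ap am : B) : Matrix (Fin 3) (Fin 3) B :=
  !![am, k, 0; (-q) • k, ap, 0; 0, 0, 1]

/-- The image of the generator matrix `(tᵢⱼ)` of `A_q(A₂)` under the fundamental representation
`π₂`, written in terms of the q-oscillator operators `k`, `a⁺ = ap`, `a⁻ = am`. -/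
def pi₂Matrix (q : R) (k ap am : B) : Matrix (Fin 3) (Fin 3) B :=
  !![1, 0, 0; 0, am, k; 0, (-q) • k, ap]

/-- The quantum minor of `T` on the rows `i, i'` and the columns `j, j'`, with the convention
`tᵢⱼ tᵢ'ⱼ' - q tᵢ'ⱼ tᵢⱼ'` for the order of the factors. -/
def quantumMinor (q : R) (T : Matrix (Fin 3) (Fin 3) B) (i i' j j' : Fin 3) : B :=
  T i j * T i' j' - q • (T i' j * T i j')

theorem pi₁Matrix_mul_pi₂Matrix_mul_pi₁Matrix
    (q : R) (k₁ ap₁ am₁ k₂ ap₂ am₂ k₃ ap₃ am₃ : B) :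
    pi₁Matrix q k₁ ap₁ am₁ * pi₂Matrix q k₂ ap₂ am₂ * pi₁Matrix q k₃ ap₃ am₃ =
      !![am₁ * am₃ - q • (k₁ * am₂ * k₃), am₁ * k₃ + k₁ * am₂ * ap₃, k₁ * k₂;
         -q • (k₁ * am₃ + ap₁ * am₂ * k₃), ap₁ * am₂ * ap₃ - q • (k₁ * k₃), ap₁ * k₂;
         q ^ 2 • (k₂ * k₃), -q • (k₂ * ap₃), ap₂] := by
  ext i j
  fin_cases i <;> fin_cases j <;>
    simp [pi₁Matrix, pi₂Matrix, Matrix.mul_apply, Fin.sum_univ_three, smul_smul, pow_two] <;>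
    abel

end QuantumMatrix

section TensorProduct

open Module (End)

variable {R V₁ V₂ V₃ : Type*} [CommRing R] [AddCommGroup V₁] [AddCommGroup V₂] [AddCommGroup V₃]
  [Module R V₁] [Module R V₂] [Module R V₃]

/-- The operator `f ⊗ g ⊗ h` on `V₁ ⊗ V₂ ⊗ V₃`; `tens3` is the case `V₁ = V₂ = V₃ = F`. -/
def tensorMap₃ (f : End R V₁) (g : End R V₂) (h : End R V₃) : End R (V₁ ⊗[R] (V₂ ⊗[R] V₃)) :=
  TensorProduct.map f (TensorProduct.map g h)

theorem tensorMap₃_mul (f f' : End R V₁) (g g' : End R V₂) (h h' : End R V₃) :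
    tensorMap₃ f g h * tensorMap₃ f' g' h' = tensorMap₃ (f * f') (g * g') (h * h') := by
  simp only [tensorMap₃, TensorProduct.map_mul]

theorem tensorMap₃_add_left (f f' : End R V₁) (g : End R V₂) (h : End R V₃) :
    tensorMap₃ (f + f') g h = tensorMap₃ f g h + tensorMap₃ f' g h :=
  map_add_left f f' _

theorem tensorMap₃_smul_left (c : R) (f : End R V₁) (g : End R V₂) (h : End R V₃) :
    tensorMap₃ (c • f) g h = c • tensorMap₃ f g h :=
  map_smul_left c f _

theorem tensorMap₃_add_middle (f : End R V₁) (g g' : End R V₂) (h : End R V₃) :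
    tensorMap₃ f (g + g') h = tensorMap₃ f g h + tensorMap₃ f g' h := by
  simp only [tensorMap₃, map_add_left, map_add_right]

theorem tensorMap₃_smul_middle (c : R) (f : End R V₁) (g : End R V₂) (h : End R V₃) :
    tensorMap₃ f (c • g) h = c • tensorMap₃ f g h := by
  simp only [tensorMap₃, map_smul_left, map_smul_right]

/-- The image of the generator matrix `(tᵢⱼ)` of `A_q(A₂)` under `π₁₂₁ = π₁ ⊗ π₂ ⊗ π₁`, where the
operators `k`, `a⁺`, `a⁻` may differ from one tensor factor to the next. -/
def pi₁₂₁Matrix (q : R) (k₁ ap₁ am₁ : End R V₁) (k₂ ap₂ am₂ : End R V₂)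
    (k₃ ap₃ am₃ : End R V₃) : Matrix (Fin 3) (Fin 3) (End R (V₁ ⊗[R] (V₂ ⊗[R] V₃))) :=
  pi₁Matrix q (tensorMap₃ k₁ 1 1) (tensorMap₃ ap₁ 1 1) (tensorMap₃ am₁ 1 1) *
    pi₂Matrix q (tensorMap₃ 1 k₂ 1) (tensorMap₃ 1 ap₂ 1) (tensorMap₃ 1 am₂ 1) *
    pi₁Matrix q (tensorMap₃ 1 1 k₃) (tensorMap₃ 1 1 ap₃) (tensorMap₃ 1 1 am₃)

variable (q : R) (k₁ ap₁ am₁ : End R V₁) (k₂ ap₂ am₂ : End R V₂) (k₃ ap₃ am₃ : End R V₃)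

theorem pi₁₂₁Matrix_eq :
    pi₁₂₁Matrix q k₁ ap₁ am₁ k₂ ap₂ am₂ k₃ ap₃ am₃ =
      !![tensorMap₃ am₁ 1 am₃ - q • tensorMap₃ k₁ am₂ k₃,
           tensorMap₃ am₁ 1 k₃ + tensorMap₃ k₁ am₂ ap₃, tensorMap₃ k₁ k₂ 1;
         -q • (tensorMap₃ k₁ 1 am₃ + tensorMap₃ ap₁ am₂ k₃),
           tensorMap₃ ap₁ am₂ ap₃ - q • tensorMap₃ k₁ 1 k₃, tensorMap₃ ap₁ k₂ 1;
         q ^ 2 • tensorMap₃ 1 k₂ k₃, -q • tensorMap₃ 1 k₂ ap₃, tensorMap₃ 1 ap₂ 1] := by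
  simp only [pi₁₂₁Matrix, pi₁Matrix_mul_pi₂Matrix_mul_pi₁Matrix, tensorMap₃_mul, one_mul,
    mul_one]

theorem quantumMinor_pi₁₂₁Matrix_rows_zero_one :
    quantumMinor q (pi₁₂₁Matrix q k₁ ap₁ am₁ k₂ ap₂ am₂ k₃ ap₃ am₃) 0 1 1 2 =
      tensorMap₃ (am₁ * ap₁ + q ^ 2 • k₁ ^ 2) k₂ k₃ +
        (tensorMap₃ (k₁ * ap₁) (am₂ * k₂) ap₃ - q • tensorMap₃ (ap₁ * k₁) (am₂ * k₂) ap₃) := by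
  simp only [quantumMinor, pi₁₂₁Matrix_eq, Matrix.of_apply, Matrix.cons_val, add_mul, sub_mul,
    smul_mul_assoc, tensorMap₃_mul, one_mul, mul_one, tensorMap₃_add_left, tensorMap₃_smul_left,
    pow_two k₁]
  module

theorem quantumMinor_pi₁₂₁Matrix_rows_zero_two :
    quantumMinor q (pi₁₂₁Matrix q k₁ ap₁ am₁ k₂ ap₂ am₂ k₃ ap₃ am₃) 0 2 1 2 =
      tensorMap₃ am₁ ap₂ k₃ + tensorMap₃ k₁ (am₂ * ap₂ + q ^ 2 • k₂ ^ 2) ap₃ := by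
  simp only [quantumMinor, pi₁₂₁Matrix_eq, Matrix.of_apply, Matrix.cons_val, add_mul,
    smul_mul_assoc, tensorMap₃_mul, one_mul, mul_one, tensorMap₃_add_middle,
    tensorMap₃_smul_middle, pow_two k₂]
  module

variable {q k₁ ap₁ am₁ k₂ ap₂ am₂}

theorem statement8_general (k_mul_ap₁ : k₁ * ap₁ = q • (ap₁ * k₁))
    (am_mul_ap₁ : am₁ * ap₁ + q ^ 2 • k₁ ^ 2 = 1) (am_mul_ap₂ : am₂ * ap₂ + q ^ 2 • k₂ ^ 2 = 1) :
    let T := pi₁₂₁Matrix q k₁ ap₁ am₁ k₂ ap₂ am₂ k₃ ap₃ am₃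
    T 0 2 = tensorMap₃ k₁ k₂ 1 ∧
    T 1 2 = tensorMap₃ ap₁ k₂ 1 ∧
    quantumMinor q T 0 1 1 2 = tensorMap₃ 1 k₂ k₃ ∧
    quantumMinor q T 0 2 1 2 = tensorMap₃ am₁ ap₂ k₃ + tensorMap₃ k₁ 1 ap₃ := by
  refine ⟨by simp [pi₁₂₁Matrix_eq], by simp [pi₁₂₁Matrix_eq], ?_, ?_⟩
  · rw [quantumMinor_pi₁₂₁Matrix_rows_zero_one, am_mul_ap₁, k_mul_ap₁, tensorMap₃_smul_left,
      sub_self, add_zero]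
  · rw [quantumMinor_pi₁₂₁Matrix_rows_zero_two, am_mul_ap₂]

end TensorProduct

section FockSpace

theorem linearMap_ext_ket {W : Type*} [AddCommMonoid W] [Module K W] {f g : F →ₗ[K] W}
    (h : ∀ m, f (ket m) = g (ket m)) : f = g :=
  Finsupp.lhom_ext' fun m => LinearMap.ext_ring (h m)

theorem opK_ket (m : ℕ) : opK (ket m) = q ^ m • ket m := by
  rw [opK, ket, Finsupp.lift_apply, Finsupp.sum_single_index (zero_smul K (q ^ m • ket m)),
    one_smul, ket]

theorem opAp_ket (m : ℕ) : opAp (ket m) = ket (m + 1) := by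
  simp [opAp, ket]

theorem opAm_ket (m : ℕ) : opAm (ket m) = (1 - q ^ (2 * m)) • ket (m - 1) := by
  simp [opAm, ket]

theorem opK_mul_opAp : opK * opAp = q • (opAp * opK) := by
  refine linearMap_ext_ket fun m => ?_
  simp only [Module.End.mul_apply, LinearMap.smul_apply, opK_ket, opAp_ket, map_smul, smul_smul,
    pow_succ']

theorem opAm_mul_opAp_add_sq_opK : opAm * opAp + q ^ 2 • opK ^ 2 = 1 := by
  refine linearMap_ext_ket fun m => ?_
  simp only [pow_two opK, Module.End.mul_apply, LinearMap.add_apply, LinearMap.smul_apply, opK_ket,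
    opAp_ket, opAm_ket, map_smul, Module.End.one_apply, Nat.add_sub_cancel, smul_smul, ← add_smul]
  have scalar_eq_one : 1 - q ^ (2 * (m + 1)) + q ^ 2 * (q ^ m * q ^ m) = 1 := by ring
  rw [scalar_eq_one, one_smul]

end FockSpace

/-- the images of `σ₁ = t₁₃`, `σ₁e₁ = t₂₃`, `σ₂ = t₁₂t₂₃ − q t₂₂t₁₃`,
`σ₂e₂ = t₁₂t₃₃ − q t₃₂t₁₃` under `π₁₂₁` (matrix indices here are `0`-based). -/
theorem statement8 :
    M 0 2 = tens3 opK opK 1 ∧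
    M 1 2 = tens3 opAp opK 1 ∧
    M 0 1 * M 1 2 - q • (M 1 1 * M 0 2) = tens3 1 opK opK ∧
    M 0 1 * M 2 2 - q • (M 2 1 * M 0 2)
      = tens3 opAm opAp opK + tens3 opK 1 opAp := by
  exact statement8_general opK opAp opAm opK_mul_opAp opAm_mul_opAp_add_sq_opK
    opAm_mul_opAp_add_sq_opK
end
end
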